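/- Let 0 < a < 1 and b a natural number with a·b ≥ 1. Then for the covering numbers of the unit ball B_W of the RKHS of the Weierstrass fractal kernel in C([−1,1]), one has 2/ln(1/a) ≤ liminf_{ε→0⁺} ln(𝒞(ε, B_W)) / (ln(1/ε))² and limsup_{ε→0⁺} ln(𝒞(ε, B_W)) / (ln(1/ε))² ≤ 4/ln(1/a). In particular, ln(𝒞(ε, B_W)) is weakly equivalent to (ln(1/ε))² as ε → 0. -/

import Mathlib

open Real Metric Filter
open scoped ENNReal Topology

/-- The covering number of a set `A` in a metric space: the minimal number (in `ℕ∞`) of balls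
of radius `ε` needed to cover `A`. -/
noncomputable def coveringNumber {X : Type*} [PseudoMetricSpace X] (ε : ℝ) (A : Set X) : ℕ∞ :=
  sInf {n : ℕ∞ | ∃ t : Finset X, (t.card : ℕ∞) = n ∧ A ⊆ ⋃ c ∈ t, Metric.closedBall c ε}

/-- The image in `C([-1,1])` of the unit ball of the RKHS of the Weierstrass fractal kernel:
continuous functions `f(x) = ∑ₙ a^(n/2)(cₙ cos(bⁿπx) + dₙ sin(bⁿπx))` with square-summable
coefficients satisfying `∑ₙ (cₙ² + dₙ²) ≤ 1`. -/
def weierstrassBall (a : ℝ) (b : ℕ) : Set C(Set.Icc (-1 : ℝ) 1, ℝ) :=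
  {f | ∃ c d : ℕ → ℝ, Summable (fun n => c n ^ 2 + d n ^ 2) ∧
    (∑' n : ℕ, (c n ^ 2 + d n ^ 2)) ≤ 1 ∧
    ∀ x : Set.Icc (-1 : ℝ) 1, f x = ∑' n : ℕ, a ^ ((n : ℝ) / 2) *
      (c n * Real.cos ((b : ℝ) ^ n * π * (x : ℝ)) +
        d n * Real.sin ((b : ℝ) ^ n * π * (x : ℝ)))}

/-!
The ball `B_W` is an ellipsoid whose semi-axes `r ^ n`, `r = √a`, `n = 0, 1, …`, each occurring
twice, point along modes that are orthonormal in `L²([-1, 1])` and bounded by `1`. Two boxes in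
these coordinates give matching bounds on `𝒞(ε)`.

* Taking `L²` coefficients is Lipschitz for the sup norm, and among the first `2N` of them `B_W`
  attains every point of the box with half-sides `r ^ n / (2N)`. Comparing the volume of this box
  with that of the images of the covering balls gives `𝒞(ε) ≥ ∏ r ^ n / (4Nε)`.
* Once `r ^ N ≈ ε` the tail of the series is negligible, and a grid of mesh `ε / (4N)` in the box
  with half-sides `r ^ n` gives `𝒞(ε) ≤ ∏ O(N r ^ n / ε)`.

With `L = ln (1/ε)` and `N ∼ L / ln (1/r)`, both products have logarithm
`2NL - N² ln (1/r) + o(L²) ∼ L² / ln (1/r) = 2L² / ln (1/a)`, so the limit inferior and the limit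
superior coincide.
-/

section

open MeasureTheory Set

/-! ### Covers in metric and normed spaces -/

theorem toReal_coveringNumber_le_card {X : Type*} [PseudoMetricSpace X] {ε : ℝ} {A : Set X}
    {t : Finset X} (ht : A ⊆ ⋃ c ∈ t, closedBall c ε) :
    (coveringNumber ε A : ℝ≥0∞).toReal ≤ t.card := by
  have h : _root_.coveringNumber ε A ≤ t.card := sInf_le ⟨t, rfl, ht⟩
  have := ENNReal.toReal_mono (ENNReal.natCast_ne_top t.card) (ENat.toENNReal_le.mpr h)
  simpa only [ENNReal.toReal_natCast] using this

theorem exists_card_eq_toReal_coveringNumber {X : Type*} [PseudoMetricSpace X] {ε : ℝ} {A : Set X}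
    {t : Finset X} (ht : A ⊆ ⋃ c ∈ t, closedBall c ε) :
    ∃ s : Finset X, A ⊆ (⋃ c ∈ s, closedBall c ε) ∧
      (s.card : ℝ) = (coveringNumber ε A : ℝ≥0∞).toReal := by
  obtain ⟨s, hcard, hs⟩ : _root_.coveringNumber ε A ∈ {n : ℕ∞ | ∃ s : Finset X,
      (s.card : ℕ∞) = n ∧ A ⊆ ⋃ c ∈ s, closedBall c ε} := csInf_mem ⟨_, t, rfl, ht⟩
  exact ⟨s, hs, by simp [← hcard]⟩

theorem prod_div_le_card_of_lipschitzWith {X ι : Type*} [PseudoMetricSpace X] [Fintype ι]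
    {ℓ : X → ι → ℝ} {K : NNReal} (hℓ : LipschitzWith K ℓ) {A : Set X} {s : ι → ℝ} (hs : 0 ≤ s)
    (hbox : Icc (-s) s ⊆ ℓ '' A) {t : Finset X} {ε : ℝ} (hε : 0 < K * ε)
    (ht : A ⊆ ⋃ c ∈ t, closedBall c ε) : ∏ i, s i / (K * ε) ≤ t.card := by
  have hcover : Icc (-s) s ⊆ ⋃ c ∈ t, closedBall (ℓ c) (K * ε) := by
    intro v hv
    obtain ⟨x, hx, rfl⟩ := hbox hv
    obtain ⟨c, hc, hxc⟩ := mem_iUnion₂.mp (ht hx)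
    exact mem_iUnion₂.mpr ⟨c, hc, hℓ.mapsTo_closedBall c ε hxc⟩
  have hvol : volume (Icc (-s) s) ≤ ∑ c ∈ t, volume (closedBall (ℓ c) (K * ε)) :=
    (measure_mono hcover).trans (measure_biUnion_finset_le t _)
  have hbox_vol : volume (Icc (-s) s) = ENNReal.ofReal (∏ i, 2 * s i) := by
    rw [Real.volume_Icc_pi,
      ENNReal.ofReal_prod_of_nonneg fun i _ ↦ mul_nonneg zero_le_two (hs i)]
    simp only [Pi.neg_apply, sub_neg_eq_add, two_mul]
  simp only [hbox_vol, Real.volume_pi_closedBall _ hε.le, Finset.sum_const, nsmul_eq_mul,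
    ← ENNReal.ofReal_natCast, ← ENNReal.ofReal_mul (Nat.cast_nonneg _)] at hvol
  rw [ENNReal.ofReal_le_ofReal_iff (by positivity)] at hvol
  calc ∏ i, s i / (K * ε) = (∏ i, 2 * s i) / (2 * (K * ε)) ^ Fintype.card ι := by
        rw [← Finset.card_univ, ← Finset.prod_const, ← Finset.prod_div_distrib]
        exact Finset.prod_congr rfl fun i _ ↦ (mul_div_mul_left _ _ two_ne_zero).symm
    _ ≤ t.card := (div_le_iff₀ (by positivity)).mpr hvol

theorem exists_cover_Icc_neg_card_le {s h : ℝ} (hs : 0 ≤ s) (hh : 0 < h) :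
    ∃ t : Finset ℝ, (t.card : ℝ) ≤ s / h + 1 ∧ Icc (-s) s ⊆ ⋃ y ∈ t, closedBall y h := by
  classical
  let y : ℕ → ℝ := fun k ↦ -s + h * (2 * k + 1)
  refine ⟨(Finset.range (⌊s / h⌋₊ + 1)).image y, ?_, fun x hx ↦ ?_⟩
  · calc (((Finset.range (⌊s / h⌋₊ + 1)).image y).card : ℝ) ≤ ⌊s / h⌋₊ + 1 := by
          exact_mod_cast Finset.card_image_le.trans_eq (Finset.card_range _)
      _ ≤ s / h + 1 := by gcongr; exact Nat.floor_le (by positivity)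
  · set u := (x + s) / (2 * h) with hu
    have hxu : x + s = 2 * h * u := by rw [hu]; field_simp
    have hu0 : 0 ≤ u := div_nonneg (by linarith [hx.1]) (by positivity)
    have hus : u ≤ s / h := by
      rw [hu, div_le_div_iff₀ (by positivity) hh]; nlinarith [hx.2]
    refine mem_iUnion₂.mpr ⟨y ⌊u⌋₊, Finset.mem_image_of_mem _ (Finset.mem_range.mpr
      (Nat.lt_succ_of_le (Nat.floor_mono hus))), ?_⟩
    have hxy : x - y ⌊u⌋₊ = h * (2 * (u - ⌊u⌋₊) - 1) := by simp only [y]; linarith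
    rw [mem_closedBall, Real.dist_eq, hxy, abs_mul, abs_of_pos hh]
    refine mul_le_of_le_one_right hh.le (abs_le.mpr ⟨?_, ?_⟩)
    · linarith [Nat.floor_le hu0]
    · linarith [Nat.lt_floor_add_one u]

theorem norm_sum_smul_sub_sum_smul_le {E ι : Type*} [SeminormedAddCommGroup E] [NormedSpace ℝ E]
    [Fintype ι] {e : ι → E} (he : ∀ i, ‖e i‖ ≤ 1) {v w h : ι → ℝ} (hvw : ∀ i, |v i - w i| ≤ h i) :
    ‖∑ i, v i • e i - ∑ i, w i • e i‖ ≤ ∑ i, h i := by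
  rw [← Finset.sum_sub_distrib]
  refine norm_sum_le_of_le _ fun i _ ↦ ?_
  rw [← sub_smul, norm_smul]
  exact (mul_le_of_le_one_right (norm_nonneg _) (he i)).trans (hvw i)

theorem exists_cover_card_le_prod {E ι : Type*} [SeminormedAddCommGroup E] [NormedSpace ℝ E]
    [Fintype ι] {e : ι → E} (he : ∀ i, ‖e i‖ ≤ 1) {A : Set E} {s h : ι → ℝ} {δ : ℝ}
    (hs : 0 ≤ s) (hh : ∀ i, 0 < h i)
    (hA : ∀ f ∈ A, ∃ v ∈ Icc (-s) s, dist f (∑ i, v i • e i) ≤ δ) :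
    ∃ t : Finset E, (t.card : ℝ) ≤ ∏ i, (s i / h i + 1) ∧
      A ⊆ ⋃ c ∈ t, closedBall c (δ + ∑ i, h i) := by
  classical
  choose net hcard hnet using fun i ↦ exists_cover_Icc_neg_card_le (hs i) (hh i)
  refine ⟨(Fintype.piFinset net).image fun w ↦ ∑ i, w i • e i, ?_, fun f hf ↦ ?_⟩
  · calc (((Fintype.piFinset net).image fun w ↦ ∑ i, w i • e i).card : ℝ)
          ≤ ∏ i, ((net i).card : ℝ) := by
            exact_mod_cast Finset.card_image_le.trans_eq (Fintype.card_piFinset net)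
      _ ≤ ∏ i, (s i / h i + 1) :=
            Finset.prod_le_prod (fun i _ ↦ Nat.cast_nonneg _) fun i _ ↦ hcard i
  · obtain ⟨v, hv, hfv⟩ := hA f hf
    have hround : ∀ i, ∃ y ∈ net i, |v i - y| ≤ h i := fun i ↦ by
      simpa only [mem_iUnion₂, exists_prop, mem_closedBall, Real.dist_eq]
        using hnet i ⟨hv.1 i, hv.2 i⟩
    choose w hw hvw using hround
    refine mem_iUnion₂.mpr ⟨_, Finset.mem_image_of_mem _ (Fintype.mem_piFinset.mpr hw), ?_⟩
    refine (dist_triangle _ _ _).trans (add_le_add hfv ?_)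
    rw [dist_eq_norm]
    exact norm_sum_smul_sub_sum_smul_le he hvw

/-! ### The trigonometric modes -/

theorem integral_cos_int_mul_pi_sub (k : ℤ) (θ : ℝ) :
    ∫ x in (-1 : ℝ)..1, cos (k * π * x - θ) = if k = 0 then 2 * cos θ else 0 := by
  split_ifs with hk
  · simp [hk, one_add_one_eq_two]
  · have hkπ : (k : ℝ) * π ≠ 0 := mul_ne_zero (Int.cast_ne_zero.mpr hk) pi_ne_zero
    have hperiod : k * π * 1 - θ = k * π * (-1) - θ + k * (2 * π) := by ring
    rw [intervalIntegral.integral_comp_mul_sub (fun x ↦ cos x) hkπ, integral_cos, hperiod,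
      sin_add_int_mul_two_pi, sub_self, smul_zero]

theorem integral_cos_sub_mul_cos_sub {k l : ℕ} (hk : 0 < k) (θ η : ℝ) :
    ∫ x in (-1 : ℝ)..1, cos (k * π * x - θ) * cos (l * π * x - η) =
      if k = l then cos (θ - η) else 0 := by
  have hprod : ∀ x : ℝ, cos (k * π * x - θ) * cos (l * π * x - η) =
      (cos ((k - l : ℤ) * π * x - (θ - η)) + cos ((k + l : ℤ) * π * x - (θ + η))) / 2 := by
    intro x
    rw [← mul_div_cancel_left₀ (_ * _) (two_ne_zero' ℝ), ← mul_assoc, two_mul_cos_mul_cos]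
    push_cast
    ring_nf
  have hint : ∀ (m : ℤ) (ξ : ℝ),
      IntervalIntegrable (fun x ↦ cos (m * π * x - ξ)) volume (-1) 1 :=
    fun m ξ ↦ Continuous.intervalIntegrable (by fun_prop) _ _
  simp_rw [hprod]
  rw [intervalIntegral.integral_div, intervalIntegral.integral_add (hint _ _) (hint _ _),
    integral_cos_int_mul_pi_sub, integral_cos_int_mul_pi_sub,
    if_neg (show ¬ ((k : ℤ) + l = 0) by lia)]
  split_ifs <;> first | lia | ring

/-- The modes `cos (bⁿπx)` (for `p = 0`) and `sin (bⁿπx)` (for `p = 1`) on `[-1, 1]`. Both are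
encoded as `cos (bⁿπx - pπ/2)`, so that one integral gives all the orthogonality relations. -/
noncomputable def weierstrassMode (b n : ℕ) (p : Fin 2) : C(Icc (-1 : ℝ) 1, ℝ) :=
  ⟨fun x ↦ cos ((b : ℝ) ^ n * π * x - p * (π / 2)), by fun_prop⟩

theorem weierstrassMode_apply_zero (b n : ℕ) (x : Icc (-1 : ℝ) 1) :
    weierstrassMode b n 0 x = cos ((b : ℝ) ^ n * π * x) := by
  simp [weierstrassMode]

theorem weierstrassMode_apply_one (b n : ℕ) (x : Icc (-1 : ℝ) 1) :
    weierstrassMode b n 1 x = sin ((b : ℝ) ^ n * π * x) := by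
  simp [weierstrassMode, cos_sub_pi_div_two]

theorem norm_weierstrassMode_le (b n : ℕ) (p : Fin 2) : ‖weierstrassMode b n p‖ ≤ 1 :=
  (ContinuousMap.norm_le _ zero_le_one).mpr fun _ ↦ abs_cos_le_one _

theorem integral_weierstrassMode_mul {b : ℕ} (hb : 2 ≤ b) (n m : ℕ) (p q : Fin 2) :
    ∫ x, weierstrassMode b n p x * weierstrassMode b m q x ∂(volume.comap Subtype.val) =
      if n = m ∧ p = q then 1 else 0 := by
  have horth := integral_cos_sub_mul_cos_sub (l := b ^ m) (pow_pos (by lia : 0 < b) n)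
    (p * (π / 2)) (q * (π / 2))
  rw [intervalIntegral.integral_of_le (by norm_num), ← integral_Icc_eq_integral_Ioc,
    ← integral_subtype_comap measurableSet_Icc] at horth
  simp only [Nat.cast_pow, (Nat.pow_right_injective hb).eq_iff] at horth
  refine horth.trans ?_
  fin_cases p <;> fin_cases q <;> simp

theorem volume_comap_subtypeVal_univ :
    volume.comap (Subtype.val : Icc (-1 : ℝ) 1 → ℝ) univ = 2 := by
  rw [comap_subtype_coe_apply measurableSet_Icc, image_univ, Subtype.range_coe, Real.volume_Icc]
  norm_num

instance isFiniteMeasure_comap_subtypeVal :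
    IsFiniteMeasure (volume.comap (Subtype.val : Icc (-1 : ℝ) 1 → ℝ)) :=
  ⟨by simp [volume_comap_subtypeVal_univ]⟩

theorem lipschitzWith_integral_mul {X : Type*} [TopologicalSpace X] [CompactSpace X]
    [MeasurableSpace X] [OpensMeasurableSpace X] (μ : Measure X) [IsFiniteMeasure μ]
    {g : C(X, ℝ)} (hg : ‖g‖ ≤ 1) :
    LipschitzWith (μ univ).toNNReal fun f : C(X, ℝ) ↦ ∫ x, f x * g x ∂μ := by
  have hint (f : C(X, ℝ)) : Integrable (fun x ↦ f x * g x) μ :=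
    (f * g).continuous.integrable_of_hasCompactSupport (HasCompactSupport.of_compactSpace _)
  refine LipschitzWith.of_dist_le_mul fun f f' ↦ ?_
  rw [Real.dist_eq, ← integral_sub (hint f) (hint f'), mul_comm]
  refine norm_integral_le_of_norm_le_const (μ := μ) (f := fun x ↦ f x * g x - f' x * g x)
    (.of_forall fun x ↦ ?_)
  rw [← sub_mul, norm_mul, dist_eq_norm]
  exact (mul_le_of_le_one_right (norm_nonneg _) ((g.norm_coe_le_norm x).trans hg)).trans
    ((f - f').norm_coe_le_norm x)

theorem abs_mul_cos_add_mul_sin_le_one {c d : ℝ} (h : c ^ 2 + d ^ 2 ≤ 1) (θ : ℝ) :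
    |c * cos θ + d * sin θ| ≤ 1 := by
  refine (sq_le_one_iff_abs_le_one _).mp ?_
  have := sq_nonneg (c * sin θ - d * cos θ)
  linear_combination h + this + (c ^ 2 + d ^ 2) * sin_sq_add_cos_sq θ

/-- The `L²([-1, 1])` coefficients of `f` against the modes of frequency `bⁿ` with `n < N`; they
recover the coordinates of a combination of these modes. -/
noncomputable def weierstrassCoeff (b N : ℕ) (f : C(Icc (-1 : ℝ) 1, ℝ)) (i : Fin N × Fin 2) : ℝ :=
  ∫ x, f x * weierstrassMode b i.1 i.2 x ∂(volume.comap Subtype.val)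

theorem lipschitzWith_weierstrassCoeff (b N : ℕ) : LipschitzWith 2 (weierstrassCoeff b N) := by
  refine LipschitzWith.of_dist_le_mul fun f g ↦ (dist_pi_le_iff (by positivity)).mpr fun i ↦ ?_
  have := (lipschitzWith_integral_mul (volume.comap Subtype.val)
    (norm_weierstrassMode_le b i.1 i.2)).dist_le_mul f g
  rwa [volume_comap_subtypeVal_univ, ENNReal.toNNReal_ofNat] at this

theorem weierstrassCoeff_sum_smul {b : ℕ} (hb : 2 ≤ b) {N : ℕ} (v : Fin N × Fin 2 → ℝ) :
    weierstrassCoeff b N (∑ i, v i • weierstrassMode b i.1 i.2) = v := by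
  ext j
  have hint (i : Fin N × Fin 2) : Integrable (fun x ↦ v i * (weierstrassMode b i.1 i.2 x *
      weierstrassMode b j.1 j.2 x)) (volume.comap (Subtype.val : Icc (-1 : ℝ) 1 → ℝ)) :=
    ((weierstrassMode b i.1 i.2 * weierstrassMode b j.1 j.2).continuous
      |>.integrable_of_hasCompactSupport (HasCompactSupport.of_compactSpace _)).const_mul _
  simp only [weierstrassCoeff, ContinuousMap.coe_sum, Finset.sum_apply, ContinuousMap.coe_smul,
    Pi.smul_apply, smul_eq_mul, Finset.sum_mul, mul_assoc]
  rw [integral_finsetSum _ fun i _ ↦ hint i]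
  simp [integral_const_mul, integral_weierstrassMode_mul hb, ← Fin.ext_iff, ← Prod.ext_iff]

/-! ### Coordinates on the Weierstrass ball -/

theorem sqrt_lt_one_of_lt_one {a : ℝ} (ha1 : a < 1) : √a < 1 := by
  rwa [sqrt_lt' one_pos, one_pow]

section WeierstrassBall

variable {a : ℝ} {b : ℕ}

theorem weierstrassBall_term_eq (ha : 0 ≤ a) (n : ℕ) (c d : ℝ) (x : Icc (-1 : ℝ) 1) :
    a ^ ((n : ℝ) / 2) * (c * cos ((b : ℝ) ^ n * π * x) + d * sin ((b : ℝ) ^ n * π * x)) =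
      ∑ p, √a ^ n * ![c, d] p * weierstrassMode b n p x := by
  rw [rpow_div_two_eq_sqrt _ ha, rpow_natCast, Fin.sum_univ_two, weierstrassMode_apply_zero,
    weierstrassMode_apply_one]
  simp only [Matrix.cons_val_zero, Matrix.cons_val_one]
  ring

theorem sum_smul_weierstrassMode_mem_weierstrassBall (ha : 0 ≤ a) {N : ℕ} {u : Fin N × Fin 2 → ℝ}
    (hu : ∑ i, u i ^ 2 ≤ 1) :
    ∑ i, (√a ^ (i.1 : ℕ) * u i) • weierstrassMode b i.1 i.2 ∈ weierstrassBall a b := by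
  let w (n : ℕ) (p : Fin 2) : ℝ := if hn : n < N then u (⟨n, hn⟩, p) else 0
  have hw (n : Fin N) (p : Fin 2) : w n p = u (n, p) := dif_pos n.isLt
  have hw_zero (n : ℕ) (hn : n ∉ Finset.range N) (p : Fin 2) : w n p = 0 :=
    dif_neg (by simpa using hn)
  have hsq_zero (n : ℕ) (hn : n ∉ Finset.range N) : w n 0 ^ 2 + w n 1 ^ 2 = 0 := by
    simp [hw_zero n hn]
  refine ⟨(w · 0), (w · 1), summable_of_ne_finset_zero hsq_zero, ?_, fun x ↦ ?_⟩
  · rw [tsum_eq_sum hsq_zero, Finset.sum_range]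
    simpa only [Fintype.sum_prod_type, Fin.sum_univ_two, hw] using hu
  · rw [tsum_eq_sum (s := Finset.range N) fun n hn ↦ by simp [hw_zero n hn], Finset.sum_range]
    simp [weierstrassBall_term_eq ha, Fintype.sum_prod_type, hw]

theorem exists_dist_sum_smul_weierstrassMode_le (ha : 0 ≤ a) (ha1 : a < 1)
    {f : C(Icc (-1 : ℝ) 1, ℝ)} (hf : f ∈ weierstrassBall a b) (N : ℕ) :
    ∃ v : Fin N × Fin 2 → ℝ, (∀ i, |v i| ≤ √a ^ (i.1 : ℕ)) ∧
      dist f (∑ i, v i • weierstrassMode b i.1 i.2) ≤ √a ^ N / (1 - √a) := by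
  obtain ⟨c, d, hsummable, hle, hf⟩ := hf
  have hr1 := sqrt_lt_one_of_lt_one ha1
  have hsq (n : ℕ) : c n ^ 2 + d n ^ 2 ≤ 1 :=
    (hsummable.le_tsum n fun m _ ↦ by positivity).trans hle
  have hu (n : ℕ) (p : Fin 2) : |![c n, d n] p| ≤ 1 := by
    refine (sq_le_one_iff_abs_le_one _).mp ?_
    fin_cases p
    · exact (le_add_of_nonneg_right (sq_nonneg (d n))).trans (hsq n)
    · exact (le_add_of_nonneg_left (sq_nonneg (c n))).trans (hsq n)
  refine ⟨fun i ↦ √a ^ (i.1 : ℕ) * ![c i.1, d i.1] i.2, fun i ↦ ?_, ?_⟩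
  · rw [abs_mul, abs_of_nonneg (by positivity)]
    exact mul_le_of_le_one_right (by positivity) (hu _ _)
  · refine (ContinuousMap.dist_le (div_nonneg (by positivity) (by linarith))).mpr fun x ↦ ?_
    let g (n : ℕ) : ℝ := a ^ ((n : ℝ) / 2) *
      (c n * cos ((b : ℝ) ^ n * π * x) + d n * sin ((b : ℝ) ^ n * π * x))
    have hg (n : ℕ) : ‖g n‖ ≤ 1 * √a ^ n := by
      rw [norm_mul, rpow_div_two_eq_sqrt _ ha, rpow_natCast, norm_of_nonneg (by positivity),
        mul_comm]
      gcongr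
      exact abs_mul_cos_add_mul_sin_le_one (hsq n) _
    have hgsum : HasSum g (f x) := by
      rw [hf x]
      have hgeom := (summable_geometric_of_lt_one (sqrt_nonneg a) hr1).mul_left 1
      exact (Summable.of_norm_bounded hgeom hg).hasSum
    have hpartial : ∑ n ∈ Finset.range N, g n = (∑ i : Fin N × Fin 2,
        (√a ^ (i.1 : ℕ) * ![c i.1, d i.1] i.2) • weierstrassMode b i.1 i.2) x := by
      simp only [g, weierstrassBall_term_eq ha, Finset.sum_range, Fintype.sum_prod_type,
        ContinuousMap.sum_apply, ContinuousMap.smul_apply, smul_eq_mul]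
    rw [← hpartial, dist_comm, dist_eq_norm, ← one_mul (√a ^ N)]
    exact norm_sub_le_of_geometric_bound_of_hasSum hr1 hg hgsum N

theorem Icc_subset_image_weierstrassCoeff_weierstrassBall (ha : 0 < a) (hb : 2 ≤ b) (N : ℕ) :
    Icc (-fun i : Fin N × Fin 2 ↦ √a ^ (i.1 : ℕ) * (2 * N : ℝ)⁻¹)
        (fun i ↦ √a ^ (i.1 : ℕ) * (2 * N : ℝ)⁻¹) ⊆
      weierstrassCoeff b N '' weierstrassBall a b := by
  have hr : 0 < √a := sqrt_pos.mpr ha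
  intro v hv
  let u (i : Fin N × Fin 2) : ℝ := v i / √a ^ (i.1 : ℕ)
  have hvu : v = fun i ↦ √a ^ (i.1 : ℕ) * u i := by
    ext i
    exact (mul_div_cancel₀ _ (by positivity)).symm
  have hu (i : Fin N × Fin 2) : |u i| ≤ (2 * N : ℝ)⁻¹ := by
    rw [abs_div, abs_of_pos (pow_pos hr _), div_le_iff₀' (by positivity)]
    exact abs_le.mpr ⟨hv.1 i, hv.2 i⟩
  have hu_l1 : ∑ i, |u i| ≤ 1 := calc
    ∑ i, |u i| ≤ ∑ _i : Fin N × Fin 2, (2 * N : ℝ)⁻¹ := Finset.sum_le_sum fun i _ ↦ hu i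
    _ = (2 * N) * (2 * N : ℝ)⁻¹ := by simp [mul_comm (N : ℝ)]
    _ ≤ 1 := mul_inv_le_one
  have hu_l2 : ∑ i, u i ^ 2 ≤ 1 := calc
    ∑ i, u i ^ 2 = ∑ i, |u i| ^ 2 := by simp only [sq_abs]
    _ ≤ (∑ i, |u i|) ^ 2 := Finset.sum_sq_le_sq_sum_of_nonneg fun i _ ↦ abs_nonneg _
    _ ≤ 1 := pow_le_one₀ (by positivity) hu_l1
  refine ⟨_, sum_smul_weierstrassMode_mem_weierstrassBall ha.le hu_l2, ?_⟩
  rw [weierstrassCoeff_sum_smul hb, ← hvu]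

theorem prod_le_card_of_cover_weierstrassBall (ha : 0 < a) (hb : 2 ≤ b) {ε : ℝ} (hε : 0 < ε)
    {t : Finset C(Icc (-1 : ℝ) 1, ℝ)} (ht : weierstrassBall a b ⊆ ⋃ f ∈ t, closedBall f ε)
    (N : ℕ) :
    ∏ i : Fin N × Fin 2, √a ^ (i.1 : ℕ) * ((4 * N : ℝ)⁻¹ * (1 / ε)) ≤ t.card := by
  have hcard := prod_div_le_card_of_lipschitzWith (lipschitzWith_weierstrassCoeff b N)
    (fun i ↦ by rw [Pi.zero_apply]; positivity)
    (Icc_subset_image_weierstrassCoeff_weierstrassBall ha hb N) (by simpa using hε) ht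
  refine Eq.trans_le (Finset.prod_congr rfl fun i _ ↦ ?_) hcard
  rw [NNReal.coe_ofNat]
  field_simp
  norm_num

/-- The number of frequencies kept at accuracy `ε`: the first `N` for which the bound
`√a ^ N / (1 - √a)` on the tail of the series is at most `ε / 2`. -/
noncomputable def weierstrassTruncation (a ε : ℝ) : ℕ :=
  ⌈logb √a ((1 - √a) / 2 * ε)⌉₊

theorem sqrt_pow_weierstrassTruncation_le (ha0 : 0 < a) (ha1 : a < 1) {ε : ℝ} (hε : 0 < ε) :
    √a ^ weierstrassTruncation a ε ≤ (1 - √a) / 2 * ε := by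
  have hr1 := sqrt_lt_one_of_lt_one ha1
  have hx : 0 < (1 - √a) / 2 * ε := by have := sub_pos.mpr hr1; positivity
  rw [← rpow_natCast, ← logb_le_iff_le_rpow_of_base_lt_one (sqrt_pos.mpr ha0) hr1 hx]
  exact Nat.le_ceil _

theorem le_sqrt_pow_of_lt_weierstrassTruncation (ha0 : 0 < a) (ha1 : a < 1) {ε : ℝ} (hε : 0 < ε)
    {n : ℕ} (hn : n < weierstrassTruncation a ε) : (1 - √a) / 2 * ε ≤ √a ^ n := by
  have hr1 := sqrt_lt_one_of_lt_one ha1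
  have hx : 0 < (1 - √a) / 2 * ε := by have := sub_pos.mpr hr1; positivity
  rw [← rpow_natCast]
  exact ((lt_logb_iff_rpow_lt_of_base_lt_one (sqrt_pos.mpr ha0) hr1 hx).mp (Nat.lt_ceil.mp hn)).le

theorem exists_cover_weierstrassBall_card_le (ha0 : 0 < a) (ha1 : a < 1) (b : ℕ) {ε : ℝ}
    (hε : 0 < ε) {N : ℕ} (hN : N = weierstrassTruncation a ε) :
    ∃ t : Finset C(Icc (-1 : ℝ) 1, ℝ), weierstrassBall a b ⊆ (⋃ f ∈ t, closedBall f ε) ∧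
      (t.card : ℝ) ≤
        ∏ i : Fin N × Fin 2, √a ^ (i.1 : ℕ) * ((4 + 2 / (1 - √a)) * N * (1 / ε)) := by
  have hr1 := sqrt_lt_one_of_lt_one ha1
  have hr1' : 0 < 1 - √a := sub_pos.mpr hr1
  have hN_pos (i : Fin N × Fin 2) : (1 : ℝ) ≤ N := Nat.one_le_cast.mpr i.1.pos
  obtain ⟨t, hcard, ht⟩ := exists_cover_card_le_prod
    (e := fun i : Fin N × Fin 2 ↦ weierstrassMode b i.1 i.2)
    (s := fun i ↦ √a ^ (i.1 : ℕ)) (h := fun _ ↦ ε / (4 * N)) (A := weierstrassBall a b)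
    (δ := √a ^ N / (1 - √a))
    (fun i ↦ norm_weierstrassMode_le b i.1 i.2) (fun i ↦ by positivity)
    (fun i ↦ by have := hN_pos i; positivity) fun f hf ↦ by
      obtain ⟨v, hv, hfv⟩ := exists_dist_sum_smul_weierstrassMode_le ha0.le ha1 hf N
      exact ⟨v, ⟨fun i ↦ (abs_le.mp (hv i)).1, fun i ↦ (abs_le.mp (hv i)).2⟩, hfv⟩
  refine ⟨t, ht.trans (iUnion₂_mono fun f _ ↦ closedBall_subset_closedBall ?_), hcard.trans
    (Finset.prod_le_prod (fun i _ ↦ by positivity) fun i _ ↦ ?_)⟩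
  · have htail : √a ^ N / (1 - √a) ≤ ε / 2 := by
      rw [div_le_iff₀ hr1', hN]
      exact (sqrt_pow_weierstrassTruncation_le ha0 ha1 hε).trans_eq (by ring)
    have hgrid : ∑ _i : Fin N × Fin 2, ε / (4 * N) ≤ ε / 2 := calc
      ∑ _i : Fin N × Fin 2, ε / (4 * N) = ε / 2 * (N * (N : ℝ)⁻¹) := by
        simp only [Finset.sum_const, Finset.card_univ, Fintype.card_prod, Fintype.card_fin,
          nsmul_eq_mul]
        push_cast
        ring
      _ ≤ ε / 2 := mul_le_of_le_one_right (by positivity) mul_inv_le_one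
    linarith
  · have hone : 1 ≤ √a ^ (i.1 : ℕ) / ((1 - √a) / 2 * ε) * N :=
      one_le_mul_of_one_le_of_one_le ((one_le_div (by positivity)).mpr
        (le_sqrt_pow_of_lt_weierstrassTruncation ha0 ha1 hε (hN ▸ i.1.isLt))) (hN_pos i)
    calc √a ^ (i.1 : ℕ) / (ε / (4 * N)) + 1
        ≤ √a ^ (i.1 : ℕ) / (ε / (4 * N)) + √a ^ (i.1 : ℕ) / ((1 - √a) / 2 * ε) * N := by gcongr
      _ = √a ^ (i.1 : ℕ) * ((4 + 2 / (1 - √a)) * N * (1 / ε)) := by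
        have := hN_pos i
        field_simp

theorem log_toReal_coveringNumber_weierstrassBall_mem_Icc (ha0 : 0 < a) (ha1 : a < 1) (hb : 2 ≤ b)
    {ε : ℝ} (hε : 0 < ε) {N : ℕ} (hN : N = weierstrassTruncation a ε) (hN0 : N ≠ 0) :
    log (coveringNumber ε (weierstrassBall a b) : ℝ≥0∞).toReal ∈
      Icc (log (∏ i : Fin N × Fin 2, √a ^ (i.1 : ℕ) * ((4 * N : ℝ)⁻¹ * (1 / ε))))
        (log (∏ i : Fin N × Fin 2, √a ^ (i.1 : ℕ) * ((4 + 2 / (1 - √a)) * N * (1 / ε)))) := by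
  obtain ⟨t, ht, ht_card⟩ := exists_cover_weierstrassBall_card_le ha0 ha1 b hε hN
  obtain ⟨s, hs, hs_card⟩ := exists_card_eq_toReal_coveringNumber ht
  have hlower := (prod_le_card_of_cover_weierstrassBall ha0 hb hε hs N).trans_eq hs_card
  have hupper := (toReal_coveringNumber_le_card ht).trans ht_card
  have hprod : 0 < ∏ i : Fin N × Fin 2, √a ^ (i.1 : ℕ) * ((4 * N : ℝ)⁻¹ * (1 / ε)) :=
    Finset.prod_pos fun i _ ↦ by positivity
  exact ⟨log_le_log hprod hlower, log_le_log (hprod.trans_le hlower) hupper⟩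

end WeierstrassBall

/-! ### Asymptotics -/

theorem log_prod_pow_mul {r y : ℝ} (hr : r ≠ 0) (hy : y ≠ 0) (N : ℕ) :
    log (∏ i : Fin N × Fin 2, r ^ (i.1 : ℕ) * y) =
      N * (N - 1) * log r + 2 * N * log y := by
  have hsum : (∑ n : Fin N, (n : ℝ)) * 2 = N * (N - 1) := by
    rw [Fin.sum_univ_eq_sum_range fun n ↦ (n : ℝ)]
    rcases N with _ | N
    · simp
    · simpa using congrArg (Nat.cast (R := ℝ)) (Finset.sum_range_id_mul_two (N + 1))
  rw [log_prod fun i _ ↦ mul_ne_zero (pow_ne_zero _ hr) hy]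
  simp only [log_mul (pow_ne_zero _ hr) hy, log_pow, Fintype.sum_prod_type, Finset.sum_const,
    Finset.card_univ, Fintype.card_prod, Fintype.card_fin, nsmul_eq_mul,
    ← Finset.mul_sum, Finset.sum_add_distrib, ← Finset.sum_mul, ← hsum]
  push_cast
  ring

section Asymptotics

variable {α : Type*} {F : Filter α} {L : α → ℝ} {N : α → ℕ} {ρ : ℝ}

theorem tendsto_log_const_mul_div_zero (hL : Tendsto L F atTop) {u : α → ℝ}
    (hu : Tendsto (fun x ↦ u x / L x) F (𝓝 ρ)) (hρ : ρ ≠ 0) {c : ℝ} (hc : c ≠ 0) :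
    Tendsto (fun x ↦ log (c * u x) / L x) F (𝓝 0) := by
  have hlogL : Tendsto (fun x ↦ log (L x) / L x) F (𝓝 0) :=
    isLittleO_log_id_atTop.tendsto_div_nhds_zero.comp hL
  have hratio : Tendsto (fun x ↦ log (c * (u x / L x)) / L x) F (𝓝 0) :=
    ((hu.const_mul c).log (mul_ne_zero hc hρ)).div_atTop hL
  rw [← add_zero 0]
  refine (hratio.add hlogL).congr' ?_
  filter_upwards [hu.eventually_ne hρ, hL.eventually_ne_atTop 0] with x hux hLx
  rw [← add_div, ← log_mul (mul_ne_zero hc hux) hLx, mul_assoc, div_mul_cancel₀ _ hLx]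

theorem tendsto_log_prod_pow_mul_div_sq {r : ℝ} (hr : r ≠ 0) (hL : Tendsto L F atTop)
    (hN : Tendsto (fun x ↦ N x / L x) F (𝓝 ρ)) {y : α → ℝ} (hy : ∀ᶠ x in F, y x ≠ 0)
    (hlogy : Tendsto (fun x ↦ log (y x) / L x) F (𝓝 1)) :
    Tendsto (fun x ↦ log (∏ i : Fin (N x) × Fin 2, r ^ (i.1 : ℕ) * y x) / L x ^ 2) F
      (𝓝 (ρ ^ 2 * log r + 2 * ρ)) := by
  have hquad := (hN.mul (hN.sub hL.inv_tendsto_atTop)).mul_const (log r)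
  have hlin := (hN.const_mul 2).mul hlogy
  convert (hquad.add hlin).congr' ?_ using 2
  · ring
  · filter_upwards [hy] with x hyx
    rw [log_prod_pow_mul hr hyx, Pi.inv_apply]
    ring

end Asymptotics

theorem tendsto_log_one_div_nhdsGT_zero : Tendsto (fun ε : ℝ ↦ log (1 / ε)) (𝓝[>] 0) atTop := by
  simpa only [one_div, Function.comp_def] using tendsto_log_atTop.comp tendsto_inv_nhdsGT_zero

theorem tendsto_log_mul_one_div_div_log {z : ℝ → ℝ} (hz0 : ∀ᶠ ε in 𝓝[>] 0, z ε ≠ 0)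
    (hz : Tendsto (fun ε ↦ log (z ε) / log (1 / ε)) (𝓝[>] 0) (𝓝 0)) :
    Tendsto (fun ε ↦ log (z ε * (1 / ε)) / log (1 / ε)) (𝓝[>] 0) (𝓝 1) := by
  have hsum := hz.add_const 1
  rw [zero_add] at hsum
  refine hsum.congr' ?_
  filter_upwards [hz0, self_mem_nhdsWithin,
    tendsto_log_one_div_nhdsGT_zero.eventually_ne_atTop 0] with ε hzε hε hL
  rw [log_mul hzε (one_div_pos.mpr hε).ne', add_div, div_self hL]

theorem tendsto_natCeil_logb_div_log {r κ : ℝ} (hr0 : 0 < r) (hr1 : r < 1) (hκ : 0 < κ) :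
    Tendsto (fun ε ↦ ⌈logb r (κ * ε)⌉₊ / log (1 / ε)) (𝓝[>] 0) (𝓝 (1 / log (1 / r))) := by
  have hL := tendsto_log_one_div_nhdsGT_zero
  have hlogr : 0 < log (1 / r) := log_pos ((one_lt_div hr0).mpr hr1)
  have hlogb : ∀ᶠ ε in 𝓝[>] (0 : ℝ),
      (log (1 / ε) - log κ) * (1 / log (1 / r)) = logb r (κ * ε) := by
    filter_upwards [self_mem_nhdsWithin] with ε hε
    rw [logb, log_mul hκ.ne' (ne_of_gt hε), one_div, one_div r, log_inv, log_inv, one_div, inv_neg]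
    ring
  have hlogb_top : Tendsto (fun ε ↦ logb r (κ * ε)) (𝓝[>] 0) atTop :=
    ((tendsto_atTop_add_const_right _ _ hL).atTop_mul_const (one_div_pos.mpr hlogr)).congr' hlogb
  have hlogb_div : Tendsto (fun ε ↦ logb r (κ * ε) / log (1 / ε)) (𝓝[>] 0)
      (𝓝 ((1 - 0) * (1 / log (1 / r)))) := by
    refine (((tendsto_const_nhds (x := (1 : ℝ))).sub (hL.const_div_atTop (log κ))).mul_const
      (1 / log (1 / r))).congr' ?_
    filter_upwards [hlogb, hL.eventually_ne_atTop 0] with ε hε hLε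
    rw [← hε, mul_div_right_comm, sub_div, div_self hLε]
  have hceil := (tendsto_nat_ceil_div_atTop.comp hlogb_top).mul hlogb_div
  rw [sub_zero, one_mul, one_mul] at hceil
  refine hceil.congr' ?_
  filter_upwards [hlogb_top.eventually_ne_atTop 0] with ε hε
  rw [Function.comp_apply, div_mul_div_cancel₀ hε]

theorem tendsto_log_prod_pow_mul_one_div_div_sq {r : ℝ} (hr0 : 0 < r) (hr1 : r < 1)
    {N : ℝ → ℕ} (hN : Tendsto (fun ε ↦ N ε / log (1 / ε)) (𝓝[>] 0) (𝓝 (1 / log (1 / r))))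
    {z : ℝ → ℝ} (hz0 : ∀ᶠ ε in 𝓝[>] 0, z ε ≠ 0)
    (hz : Tendsto (fun ε ↦ log (z ε) / log (1 / ε)) (𝓝[>] 0) (𝓝 0)) :
    Tendsto (fun ε ↦ log (∏ i : Fin (N ε) × Fin 2, r ^ (i.1 : ℕ) * (z ε * (1 / ε))) /
      log (1 / ε) ^ 2) (𝓝[>] 0) (𝓝 (1 / log (1 / r))) := by
  have hy0 : ∀ᶠ ε in 𝓝[>] (0 : ℝ), z ε * (1 / ε) ≠ 0 := by
    filter_upwards [hz0, self_mem_nhdsWithin] with ε hzε hε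
    exact mul_ne_zero hzε (one_div_pos.mpr hε).ne'
  convert tendsto_log_prod_pow_mul_div_sq hr0.ne' tendsto_log_one_div_nhdsGT_zero hN hy0
    (tendsto_log_mul_one_div_div_log hz0 hz) using 2
  have hlogr : log r ≠ 0 := (log_neg hr0 hr1).ne
  rw [one_div r, log_inv]
  field_simp
  norm_num

theorem tendsto_weierstrassTruncation_div_log {a : ℝ} (ha0 : 0 < a) (ha1 : a < 1) :
    Tendsto (fun ε ↦ weierstrassTruncation a ε / log (1 / ε)) (𝓝[>] 0)
      (𝓝 (1 / log (1 / √a))) := by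
  have hr1 := sqrt_lt_one_of_lt_one ha1
  exact tendsto_natCeil_logb_div_log (sqrt_pos.mpr ha0) hr1 (half_pos (sub_pos.mpr hr1))

theorem weierstrass_coveringNumber_asymptotics_general {a : ℝ} {b : ℕ} (ha0 : 0 < a) (ha1 : a < 1)
    (hb : 2 ≤ b) :
    Tendsto (fun ε : ℝ ↦ log (coveringNumber ε (weierstrassBall a b) : ℝ≥0∞).toReal /
      log (1 / ε) ^ 2) (𝓝[>] 0) (𝓝 (2 / log (1 / a))) := by
  have hr0 : 0 < √a := sqrt_pos.mpr ha0
  have hr1 := sqrt_lt_one_of_lt_one ha1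
  have hlimit : 2 / log (1 / a) = 1 / log (1 / √a) := by
    rw [one_div a, one_div √a, log_inv, log_inv, log_sqrt ha0.le, ← neg_div, one_div_div]
  have hρ : 1 / log (1 / √a) ≠ 0 := (one_div_pos.mpr (log_pos ((one_lt_div hr0).mpr hr1))).ne'
  have hN := tendsto_weierstrassTruncation_div_log ha0 ha1
  have hN0 : ∀ᶠ ε in 𝓝[>] (0 : ℝ), (weierstrassTruncation a ε : ℝ) ≠ 0 :=
    (hN.eventually_ne hρ).mono fun ε hε ↦ (div_ne_zero_iff.mp hε).1
  have hlogN {c : ℝ} (hc : c ≠ 0) :=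
    tendsto_log_const_mul_div_zero tendsto_log_one_div_nhdsGT_zero hN hρ hc
  have hlower := tendsto_log_prod_pow_mul_one_div_div_sq hr0 hr1 hN
    (z := fun ε ↦ (4 * weierstrassTruncation a ε : ℝ)⁻¹)
    (hN0.mono fun ε hε ↦ inv_ne_zero (mul_ne_zero four_ne_zero hε))
    (by simpa only [log_inv, neg_div, neg_zero] using (hlogN four_ne_zero).neg)
  have hK : 4 + 2 / (1 - √a) ≠ 0 := by have := sub_pos.mpr hr1; positivity
  have hupper := tendsto_log_prod_pow_mul_one_div_div_sq hr0 hr1 hN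
    (hN0.mono fun ε hε ↦ mul_ne_zero hK hε) (hlogN hK)
  have hbounds := (hN0.and self_mem_nhdsWithin).mono fun ε hε ↦
    log_toReal_coveringNumber_weierstrassBall_mem_Icc ha0 ha1 hb hε.2 rfl
      (Nat.cast_ne_zero.mp hε.1)
  rw [hlimit]
  exact tendsto_of_tendsto_of_tendsto_of_le_of_le' hlower hupper
    (hbounds.mono fun ε hε ↦ div_le_div_of_nonneg_right hε.1 (sq_nonneg _))
    (hbounds.mono fun ε hε ↦ div_le_div_of_nonneg_right hε.2 (sq_nonneg _))

end

/-- **Main theorem.** For `0 < a < 1` and `b : ℕ` with `a * b ≥ 1`, the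
covering numbers of the unit RKHS ball `B_W` of the Weierstrass fractal kernel in `C([-1,1])`
satisfy
`2/ln(1/a) ≤ liminf_{ε→0⁺} ln 𝒞(ε, B_W) / (ln(1/ε))²` and
`limsup_{ε→0⁺} ln 𝒞(ε, B_W) / (ln(1/ε))² ≤ 4/ln(1/a)`. -/
theorem weierstrass_coveringNumber_asymptotics
    (a : ℝ) (b : ℕ) (ha0 : 0 < a) (ha1 : a < 1) (hab : 1 ≤ a * b) :
    2 / Real.log (1 / a) ≤
      liminf (fun ε : ℝ =>
        Real.log ((coveringNumber ε (weierstrassBall a b) : ℝ≥0∞)).toReal /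
          (Real.log (1 / ε)) ^ 2) (𝓝[>] (0 : ℝ)) ∧
    limsup (fun ε : ℝ =>
        Real.log ((coveringNumber ε (weierstrassBall a b) : ℝ≥0∞)).toReal /
          (Real.log (1 / ε)) ^ 2) (𝓝[>] (0 : ℝ)) ≤
      4 / Real.log (1 / a) := by
  have hb : 2 ≤ b := by
    by_contra! hb
    have hb1 : (b : ℝ) ≤ 1 := Nat.cast_le_one.mpr (Nat.le_of_lt_succ hb)
    exact (hab.trans (mul_le_of_le_one_right ha0.le hb1)).not_gt ha1
  have hlim := weierstrass_coveringNumber_asymptotics_general ha0 ha1 hb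
  have hlog : 0 < Real.log (1 / a) := Real.log_pos ((one_lt_div ha0).mpr ha1)
  rw [hlim.liminf_eq, hlim.limsup_eq]
  exact ⟨le_rfl, by gcongr; norm_num⟩
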